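/- Let ω₋ < ω₊ be real numbers, let Φ : ℝ → ℝ be a non-decreasing bounded function with Φ(λ) ≤ 0 for all λ, and let g : ℝ → [0,∞) be a bounded probability density (∫_ℝ g = 1) with g(λ) = 0 for λ ∉ [ω₋, ω₊]. Then for every γ > 0 one has ∫_ℝ (Φ(λ+γ) − Φ(λ)) g(λ) dλ ≤ −γ · ‖g‖_∞ · Φ(ω₋), where ‖g‖_∞ denotes the essential supremum of g. -/

import Mathlib

open MeasureTheory

/-!
The increment `Φ (x + γ) - Φ x` is nonnegative and `g` vanishes outside `[ω₋, ω₊]`, so the integral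
is at most `‖g‖_∞` times the integral of the increment over `[ω₋, ω₊]`. The latter telescopes to
`∫_{ω₊}^{ω₊ + γ} Φ - ∫_{ω₋}^{ω₋ + γ} Φ`, which is at most `γ (Φ (ω₊ + γ) - Φ ω₋)` by monotonicity,
and `Φ (ω₊ + γ) ≤ 0`.
-/

section Holder

variable {α 𝕜 E : Type*} [MeasurableSpace α] {μ : Measure α}
  [NormedRing 𝕜] [NormedAddCommGroup E] [NormedSpace ℝ E] [Module 𝕜 E] [IsBoundedSMul 𝕜 E]

theorem norm_setIntegral_smul_le_setIntegral_norm_mul_eLpNorm_top {s : Set α} {φ : α → 𝕜}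
    {g : α → E} (hφ : IntegrableOn φ s μ) (hg : MemLp g ⊤ μ) :
    ‖∫ x in s, φ x • g x ∂μ‖ ≤ (∫ x in s, ‖φ x‖ ∂μ) * (eLpNorm g ⊤ μ).toReal := by
  rw [toReal_eLpNorm hg.aestronglyMeasurable, ← integral_mul_const]
  refine norm_integral_le_of_norm_le (hφ.norm.mul_const _) ?_
  filter_upwards [ae_restrict_of_ae (ae_le_lpNorm_exponent_top hg)] with x hgx
  exact (norm_smul_le _ _).trans (by gcongr)

end Holder

section ForwardDifference

theorem fwdDiff_eq_smul_slope {k E : Type*} [Field k] [AddCommGroup E] [Module k E]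
    (f : k → E) (c x : k) : fwdDiff c f x = c • slope f x (x + c) := by
  simpa [fwdDiff] using (sub_smul_slope f x (x + c)).symm

variable {f : ℝ → ℝ} {a b c : ℝ}

theorem fwdDiff_nonneg_of_monotoneOn (hf : MonotoneOn f (Set.Icc a (b + c))) (hc : 0 ≤ c)
    {x : ℝ} (hx : x ∈ Set.Icc a b) : 0 ≤ fwdDiff c f x :=
  sub_nonneg.2 <| hf ⟨hx.1, by linarith [hx.2]⟩ ⟨by linarith [hx.1], by linarith [hx.2]⟩
    (by linarith)

theorem intervalIntegrable_fwdDiff_of_monotoneOn (hf : MonotoneOn f (Set.Icc a (b + c)))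
    (hab : a ≤ b) (hc : 0 ≤ c) : IntervalIntegrable (fwdDiff c f) volume a b := by
  simpa only [← smul_eq_mul, ← fwdDiff_eq_smul_slope] using
    (hf.intervalIntegrable_slope hab hc).const_mul c

theorem intervalIntegral_fwdDiff_le_of_monotoneOn (hf : MonotoneOn f (Set.Icc a (b + c)))
    (hab : a ≤ b) (hc : 0 ≤ c) :
    ∫ x in a..b, fwdDiff c f x ≤ c * (f (b + c) - f a) := by
  simp only [fwdDiff_eq_smul_slope, intervalIntegral.integral_smul]
  exact mul_le_mul_of_nonneg_left (hf.intervalIntegral_slope_le hab hc) hc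

theorem setIntegral_norm_fwdDiff_le_of_monotoneOn (hf : MonotoneOn f (Set.Icc a (b + c)))
    (hab : a ≤ b) (hc : 0 ≤ c) :
    ∫ x in Set.Icc a b, ‖fwdDiff c f x‖ ≤ c * (f (b + c) - f a) :=
  calc ∫ x in Set.Icc a b, ‖fwdDiff c f x‖
      = ∫ x in Set.Icc a b, fwdDiff c f x :=
        setIntegral_congr_fun measurableSet_Icc fun _ hx ↦
          Real.norm_of_nonneg (fwdDiff_nonneg_of_monotoneOn hf hc hx)
    _ = ∫ x in a..b, fwdDiff c f x := by
        rw [integral_Icc_eq_integral_Ioc, intervalIntegral.integral_of_le hab]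
    _ ≤ c * (f (b + c) - f a) := intervalIntegral_fwdDiff_le_of_monotoneOn hf hab hc

end ForwardDifference

theorem wegner_integration_lemma_general {E : Type*} [NormedAddCommGroup E] [NormedSpace ℝ E]
    {a b γ : ℝ} (hab : a ≤ b) (hγ : 0 ≤ γ) {Φ : ℝ → ℝ}
    (hΦ : MonotoneOn Φ (Set.Icc a (b + γ))) {g : ℝ → E} (hg : MemLp g ⊤)
    (hgsupp : ∀ x, x ∉ Set.Icc a b → g x = 0) :
    ‖∫ x, (Φ (x + γ) - Φ x) • g x‖ ≤
      γ * (Φ (b + γ) - Φ a) * (eLpNorm g ⊤ volume).toReal := by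
  have hint : IntegrableOn (fwdDiff γ Φ) (Set.Icc a b) :=
    (intervalIntegrable_iff_integrableOn_Icc_of_le hab).1
      (intervalIntegrable_fwdDiff_of_monotoneOn hΦ hab hγ)
  calc ‖∫ x, fwdDiff γ Φ x • g x‖
      = ‖∫ x in Set.Icc a b, fwdDiff γ Φ x • g x‖ := by
        rw [setIntegral_eq_integral_of_forall_compl_eq_zero fun x hx ↦ by
          rw [hgsupp x hx, smul_zero]]
    _ ≤ (∫ x in Set.Icc a b, ‖fwdDiff γ Φ x‖) * (eLpNorm g ⊤ volume).toReal :=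
        norm_setIntegral_smul_le_setIntegral_norm_mul_eLpNorm_top hint hg
    _ ≤ γ * (Φ (b + γ) - Φ a) * (eLpNorm g ⊤ volume).toReal := by
        gcongr
        exact setIntegral_norm_fwdDiff_le_of_monotoneOn hΦ hab hγ

/-- The unnamed integration lemma in Section 4: for a non-decreasing bounded non-positive
function `Φ` and a bounded probability density `g` supported in `[ω₋, ω₊]`, one has
`∫ (Φ(λ+γ) − Φ(λ)) g(λ) dλ ≤ −γ ‖g‖_∞ Φ(ω₋)` for all `γ > 0`. -/
theorem wegner_integration_lemma
    (ωm ωp : ℝ) (hω : ωm < ωp)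
    (Φ : ℝ → ℝ) (hΦmono : Monotone Φ) (hΦbdd : ∃ C, ∀ x, |Φ x| ≤ C)
    (hΦneg : ∀ x, Φ x ≤ 0)
    (g : ℝ → ℝ) (hg0 : ∀ x, 0 ≤ g x) (hgbdd : ∃ J, ∀ x, g x ≤ J)
    (hgint : Integrable g) (hgprob : ∫ x, g x = 1)
    (hgsupp : ∀ x, x ∉ Set.Icc ωm ωp → g x = 0)
    (γ : ℝ) (hγ : 0 < γ) :
    ∫ lam, (Φ (lam + γ) - Φ lam) * g lam ≤ -γ * (eLpNorm g ⊤ volume).toReal * Φ ωm := by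
  obtain ⟨J, hJ⟩ := hgbdd
  have hg : MemLp g ⊤ := memLp_top_of_bound hgint.aestronglyMeasurable J <|
    .of_forall fun x ↦ (Real.norm_of_nonneg (hg0 x)).trans_le (hJ x)
  calc ∫ lam, (Φ (lam + γ) - Φ lam) * g lam
      ≤ γ * (Φ (ωp + γ) - Φ ωm) * (eLpNorm g ⊤ volume).toReal :=
        (Real.le_norm_self _).trans <|
          wegner_integration_lemma_general hω.le hγ.le (hΦmono.monotoneOn _) hg hgsupp
    _ ≤ γ * (0 - Φ ωm) * (eLpNorm g ⊤ volume).toReal := by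
        gcongr
        exact hΦneg _
    _ = -γ * (eLpNorm g ⊤ volume).toReal * Φ ωm := by ring
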